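/- Assume 𝔤 is simple. If Γ_𝔨 is a finite non-cyclic group, then for every group homomorphism χ : Γ_𝔨 → ℂ∖{0} (into the multiplicative group of ℂ) there exists a root α ∈ Ω with ᾱ ≠ 0 and χ(ᾱ) = 1. -/

import Mathlib

open LieAlgebra

section CombinatorialDefs

variable {V : Type*} [AddCommGroup V] [Module ℂ V]

/-- `P` is a closed symmetric subsystem of `Ω`: `P ⊆ Ω`, `P = -P`, and `P` is closed
under addition within `Ω`. -/
def IsClosedSymmetricSubsystem (Ω P : Set V) : Prop :=
  P ⊆ Ω ∧ (∀ a ∈ P, -a ∈ P) ∧ ∀ a ∈ P, ∀ b ∈ P, a + b ∈ Ω → a + b ∈ P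

/-- `Pi` is a system of simple roots of `Q`: a linearly independent subset of `Q` such that
every element of `Q` is an integral linear combination of elements of `Pi` with coefficients
all nonnegative or all nonpositive. -/
def IsSimpleSystem (Q Pi : Set V) : Prop :=
  Pi ⊆ Q ∧ LinearIndependent ℂ (Subtype.val : Pi → V) ∧
    ∀ q ∈ Q, ∃ c : V →₀ ℤ, (c.support : Set V) ⊆ Pi ∧
      q = c.sum (fun v n => n • v) ∧ ((∀ v, 0 ≤ c v) ∨ (∀ v, c v ≤ 0))

/-- The Levi procedure: `Q' = ℤΣ ∩ Q` for a subset `Sig` of a system of simple roots of `Q`. -/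
def LeviStep (Q Q' : Set V) : Prop :=
  ∃ Pi Sig : Set V, IsSimpleSystem Q Pi ∧ Sig ⊆ Pi ∧
    Q' = {q ∈ Q | q ∈ AddSubgroup.closure Sig}

/-- The Dynkin procedure: `Q'` consists of those elements of `Q` whose coefficient of `α`
in the expansion in the simple system `Pi` is divisible by `n`. -/
def DynkinStep (Q Q' : Set V) : Prop :=
  ∃ Pi : Set V, IsSimpleSystem Q Pi ∧ ∃ α ∈ Pi, ∃ n : ℕ, 0 < n ∧
    Q' = {β ∈ Q | ∃ c : V →₀ ℤ, (c.support : Set V) ⊆ Pi ∧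
      β = c.sum (fun v k => k • v) ∧ (n : ℤ) ∣ c α}

end CombinatorialDefs

section LieSetup

variable (L : Type*) [LieRing L] [LieAlgebra ℂ L] [FiniteDimensional ℂ L]
  (H : LieSubalgebra ℂ L) [H.IsCartanSubalgebra]

/-- The set `Ω` of roots of `L` with respect to the Cartan subalgebra `H`, regarded as
(nonzero) linear functionals on `H` with nonzero root space. -/
def lieRoots : Set (Module.Dual ℂ H) :=
  {α | α ≠ 0 ∧ rootSpace H ⇑α ≠ ⊥}

/-- The group `Γ_𝔨 = ℤΩ / ℤP`. -/
abbrev GammaK (P : Set (Module.Dual ℂ H)) : Type _ :=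
  AddSubgroup.closure (lieRoots L H) ⧸
    (AddSubgroup.closure P).addSubgroupOf (AddSubgroup.closure (lieRoots L H))

/-- The image `ᾱ` of a root `α` in `Γ_𝔨 = ℤΩ / ℤP`. -/
def rootImage (P : Set (Module.Dual ℂ H)) {α : Module.Dual ℂ H}
    (hα : α ∈ lieRoots L H) : GammaK L H P :=
  QuotientAddGroup.mk ⟨α, AddSubgroup.subset_closure hα⟩

/-- The subspace `𝔨 = 𝔥 ⊕ ⨁_{α ∈ P} 𝔤_α` of `L`. -/
noncomputable def lieK (P : Set (Module.Dual ℂ H)) : Submodule ℂ L :=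
  H.toSubmodule ⊔ ⨆ α ∈ P, (rootSpace H ⇑α : LieSubmodule ℂ H L).toSubmodule

/-- The subspace `𝔪 = ⨁_{γ ∈ Ω \ P} 𝔤_γ` of `L`. -/
noncomputable def lieM (P : Set (Module.Dual ℂ H)) : Submodule ℂ L :=
  ⨆ γ ∈ lieRoots L H \ P, (rootSpace H ⇑γ : LieSubmodule ℂ H L).toSubmodule

end LieSetup

/-!
A character of the finite group `Γ` lifts to an integral functional `y` on the root lattice, read
modulo the order `n` of its image. Translating `y` by `n` times a combination of coroots (a move
of the affine Weyl group) brings it into the fundamental alcove, so that all its values on roots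
lie in `[-n, n]`. Relative to a base on which `y` is nonnegative, a root killed by the character
then has `y`-value `0` or `±n`, that is, it lies on a wall of the alcove: it is a combination of the
simple roots with value `0` and of the highest root. If every root killed by the character
already vanishes in `Γ`, then finiteness of `Γ` makes these walls span; by counting dimensions all
but at most one simple root vanish in `Γ`, and `Γ` is cyclic.
-/

section Prelim

open Module Filter

theorem isAddCyclic_of_closure_eq_top {G : Type*} [AddGroup G] {T : Set G}
    (hT : AddSubgroup.closure T = ⊤) (h : (T \ {0}).Subsingleton) : IsAddCyclic G := by
  rw [isAddCyclic_iff_exists_zmultiples_eq_top]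
  rcases h.eq_empty_or_singleton with h | ⟨g, h⟩
  · exact ⟨0, by rw [← hT, ← AddSubgroup.closure_sdiff_zero, h]; simp⟩
  · exact ⟨g, by rw [← hT, ← AddSubgroup.closure_sdiff_zero, h, AddSubgroup.zmultiples_eq_closure]⟩

theorem apply_nonneg_of_mem_closure {M K : Type*} [AddMonoid M] [AddCommMonoid K]
    [PartialOrder K] [IsOrderedAddMonoid K] {f : M →+ K} {S : Set M} (hS : ∀ s ∈ S, 0 ≤ f s)
    {v : M} (hv : v ∈ AddSubmonoid.closure S) : 0 ≤ f v :=
  (AddSubmonoid.closure_le (S := (AddSubmonoid.nonneg K).comap f)).2 hS hv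

theorem mem_closure_of_apply_eq_zero {M K : Type*} [AddMonoid M] [AddCommMonoid K]
    [PartialOrder K] [IsOrderedAddMonoid K] {f : M →+ K} {S : Set M} (hS : ∀ s ∈ S, 0 ≤ f s)
    {v : M} (hv : v ∈ AddSubmonoid.closure S) (hfv : f v = 0) :
    v ∈ AddSubmonoid.closure {s ∈ S | f s = 0} := by
  induction hv using AddSubmonoid.closure_induction with
  | mem s hs => exact AddSubmonoid.subset_closure ⟨hs, hfv⟩
  | zero => exact zero_mem _
  | add v w hv hw ihv ihw =>
    rw [map_add, add_eq_zero_iff_of_nonneg (apply_nonneg_of_mem_closure hS hv)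
      (apply_nonneg_of_mem_closure hS hw)] at hfv
    exact add_mem (ihv hfv.1) (ihw hfv.2)

theorem mem_span_of_mem_closure_of_apply_eq_zero {ι M K : Type*} (R : Type*) [Semiring R]
    [AddCommMonoid M] [Module R M] [AddCommMonoid K] [PartialOrder K] [IsOrderedAddMonoid K]
    {f : M →+ K} {v : ι → M} {s : Set ι} (hs : ∀ j ∈ s, 0 ≤ f (v j)) {x : M}
    (hx : x ∈ AddSubmonoid.closure (v '' s)) (hfx : f x = 0) :
    x ∈ Submodule.span R (v '' {j | j ∈ s ∧ f (v j) = 0}) := by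
  refine (AddSubmonoid.closure_le (S := (Submodule.span R _).toAddSubmonoid)).2 ?_
    (mem_closure_of_apply_eq_zero (Set.forall_mem_image.2 hs) hx hfx)
  rintro _ ⟨⟨j, hj, rfl⟩, hfj⟩
  exact Submodule.subset_span ⟨j, ⟨hj, hfj⟩, rfl⟩

theorem eq_zero_or_eq_or_eq_neg_of_dvd_of_abs_le {m n : ℤ} (h : n ∣ m) (hle : |m| ≤ n) :
    m = 0 ∨ m = n ∨ m = -n := by
  refine or_iff_not_imp_left.2 fun hm => abs_eq_abs.1 (le_antisymm (hle.trans (le_abs_self n)) ?_)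
  exact Int.le_of_dvd (abs_pos.2 hm) ((abs_dvd_abs n m).2 h)

theorem eventually_sign_mul_add_eq {u : ℚ} (hu : u ≠ 0) (w : ℚ) :
    ∀ᶠ K in atTop, SignType.sign (K * u + w) = SignType.sign u := by
  rcases hu.lt_or_gt with hu | hu
  · filter_upwards [(tendsto_atBot_add_const_right _ w
      (tendsto_id.atTop_mul_const_of_neg hu)).eventually_lt_atBot 0] with K hK
    rw [sign_neg hu, sign_neg (by simpa using hK)]
  · filter_upwards [(tendsto_atTop_add_const_right _ w
      (tendsto_id.atTop_mul_const hu)).eventually_gt_atTop 0] with K hK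
    rw [sign_pos hu, sign_pos (by simpa using hK)]

theorem exists_addMonoidHom_rat_extension {M : Type*} [AddCommGroup M] {G : AddSubgroup M}
    (y : G →+ ℤ) : ∃ f : M →+ ℚ, ∀ v : G, f v = y v := by
  obtain ⟨f, hf⟩ := (Baer.of_divisible ℚ).extension_property_addMonoidHom G.subtype
    G.subtype_injective ((Int.castAddHom ℚ).comp y)
  exact ⟨f, DFunLike.congr_fun hf⟩

theorem subsingleton_sdiff_of_span_insert_eq_top {K V ι : Type*} [DivisionRing K]
    [AddCommGroup V] [Module K V] {v : ι → V} {s t : Set ι} (hv : LinearIndepOn K v s)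
    (hts : t ⊆ s) {w : V} (h : Submodule.span K (insert w (v '' t)) = ⊤) :
    (s \ t).Subsingleton := by
  intro i hi j hj
  by_contra hij
  have hti : t ⊆ s \ {i} := Set.subset_sdiff_singleton hts hi.2
  have htj : insert i t ⊆ s \ {j} :=
    Set.insert_subset ⟨hi.1, hij⟩ (Set.subset_sdiff_singleton hts hj.2)
  have hw : w ∈ Submodule.span K (v '' insert i t) := by
    rw [Set.image_insert_eq]
    refine mem_span_insert_exchange (h ▸ Submodule.mem_top) fun hit => ?_
    exact hv.notMem_span hi.1 (Submodule.span_mono (Set.image_mono hti) hit)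
  have htop : Submodule.span K (v '' insert i t) = ⊤ := by
    rw [eq_top_iff, ← h, Submodule.span_le, Set.insert_subset_iff]
    exact ⟨hw, (Set.image_mono (Set.subset_insert i t)).trans Submodule.subset_span⟩
  exact hv.notMem_span hj.1
    (Submodule.span_mono (Set.image_mono htj) (htop ▸ Submodule.mem_top))

theorem span_le_span_of_finite_quotient {K V : Type*} [DivisionRing K] [CharZero K]
    [AddCommGroup V] [Module K V] {Ω P : Set V}
    [Finite (AddSubgroup.closure Ω ⧸
      (AddSubgroup.closure P).addSubgroupOf (AddSubgroup.closure Ω))] :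
    Submodule.span K Ω ≤ Submodule.span K P := by
  set Q := (AddSubgroup.closure P).addSubgroupOf (AddSubgroup.closure Ω)
  refine Submodule.span_le.2 fun ω hω => ?_
  have hmem : Q.index • ω ∈ AddSubgroup.closure P := AddSubgroup.mem_addSubgroupOf.1
    (Q.nsmul_index_mem ⟨ω, AddSubgroup.subset_closure hω⟩)
  have hspan : (Q.index : K) • ω ∈ Submodule.span K P := by
    rw [Nat.cast_smul_eq_nsmul]
    exact (AddSubgroup.closure_le (Submodule.span K P).toAddSubgroup).2 Submodule.subset_span hmem
  have : Q.FiniteIndex := AddSubgroup.finiteIndex_of_finite_quotient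
  have hindex : (Q.index : K) ≠ 0 := Nat.cast_ne_zero.2 AddSubgroup.FiniteIndex.index_ne_zero
  exact (Submodule.smul_mem_iff _ hindex).1 hspan

theorem exists_addMonoidHom_zmod_apply_eq_zero_iff {G R : Type*} [AddGroup G] [Finite G]
    [CommRing R] [IsDomain R] (χ : AddChar G R) :
    ∃ n ≠ 0, ∃ ψ : G →+ ZMod n, ∀ x, ψ x = 0 ↔ χ x = 1 := by
  let u : Multiplicative G →* Rˣ := χ.toMonoidHom.toHomUnits
  have : Finite u.range := Set.finite_range u
  let e : u.range ≃* Multiplicative (ZMod (Nat.card u.range)) :=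
    (zmodCyclicMulEquiv inferInstance).symm
  refine ⟨Nat.card u.range, Nat.card_pos.ne',
    AddMonoidHom.toMultiplicative.symm (e.toMonoidHom.comp u.rangeRestrict), fun x => ?_⟩
  calc e (u.rangeRestrict (.ofAdd x)) = 1 ↔ u (.ofAdd x) = 1 := by
        rw [EmbeddingLike.map_eq_one_iff, Subtype.ext_iff]; rfl
    _ ↔ χ x = 1 := Units.ext_iff

end Prelim

section RootPairing

open Module Filter

variable {ι R M N : Type*} [Field R] [CharZero R] [AddCommGroup M] [Module R M]
  [AddCommGroup N] [Module R N] (P : RootPairing ι R M N) [P.IsCrystallographic]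

theorem two_mul_sum_pairingIn_mul_apply [Fintype ι] (y : Dual ℤ (P.rootSpan ℤ)) (i : ι) :
    2 * ∑ k, P.pairingIn ℤ k i * y (P.rootSpanMem ℤ k) =
      (∑ k, P.pairingIn ℤ k i ^ 2) * y (P.rootSpanMem ℤ i) := by
  have hroot (k : ι) : P.rootSpanMem ℤ (P.reflectionPerm i k) =
      P.rootSpanMem ℤ k - P.pairingIn ℤ k i • P.rootSpanMem ℤ i :=
    Subtype.ext (by simp [P.root_reflectionPerm, P.reflection_apply_root' ℤ])
  have hterm (k : ι) :
      P.pairingIn ℤ (P.reflectionPerm i k) i * y (P.rootSpanMem ℤ (P.reflectionPerm i k)) =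
        P.pairingIn ℤ k i ^ 2 * y (P.rootSpanMem ℤ i) -
          P.pairingIn ℤ k i * y (P.rootSpanMem ℤ k) := by
    rw [← P.pairingIn_reflectionPerm, P.pairingIn_reflectionPerm_self_right, hroot, map_sub,
      map_zsmul, smul_eq_mul]
    ring
  have hsum := Equiv.sum_comp (P.reflectionPerm i)
    (fun k => P.pairingIn ℤ k i * y (P.rootSpanMem ℤ k))
  simp only [hterm, Finset.sum_sub_distrib, ← Finset.sum_mul] at hsum
  linarith

theorem sum_sq_apply_sub_smul_coroot'In [Fintype ι] (y : Dual ℤ (P.rootSpan ℤ)) (n : ℤ) (i : ι) :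
    ∑ k, (y - n • P.coroot'In ℤ i) (P.rootSpanMem ℤ k) ^ 2 =
      ∑ k, y (P.rootSpanMem ℤ k) ^ 2 +
        n * (∑ k, P.pairingIn ℤ k i ^ 2) * (n - y (P.rootSpanMem ℤ i)) := by
  have hterm (k : ι) : (y - n • P.coroot'In ℤ i) (P.rootSpanMem ℤ k) ^ 2 =
      y (P.rootSpanMem ℤ k) ^ 2 - n * (2 * (P.pairingIn ℤ k i * y (P.rootSpanMem ℤ k))) +
        n ^ 2 * P.pairingIn ℤ k i ^ 2 := by
    rw [LinearMap.sub_apply, LinearMap.smul_apply, P.coroot'In_rootSpanMem_eq_pairingIn,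
      smul_eq_mul]
    ring
  simp only [hterm, Finset.sum_add_distrib, Finset.sum_sub_distrib, ← Finset.mul_sum,
    two_mul_sum_pairingIn_mul_apply]
  ring

variable [Finite ι]

-- If `y αᵢ > n`, then subtracting `n` times the coroot `αᵢ^∨` lowers the energy `∑ₖ y(αₖ)²`.
theorem exists_forall_add_smul_apply_rootSpanMem_le (y : Dual ℤ (P.rootSpan ℤ)) {n : ℤ}
    (hn : 0 < n) :
    ∃ z : Dual ℤ (P.rootSpan ℤ), ∀ i, (y + n • z) (P.rootSpanMem ℤ i) ≤ n := by
  have := Fintype.ofFinite ι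
  let energy (z : Dual ℤ (P.rootSpan ℤ)) : ℤ := ∑ k, (y + n • z) (P.rootSpanMem ℤ k) ^ 2
  have energy_nonneg (z) : 0 ≤ energy z := Finset.sum_nonneg fun k _ => sq_nonneg _
  obtain ⟨z, -, hz⟩ := exists_minimalFor_of_wellFoundedLT (fun _ => True)
    (fun z => (energy z).toNat) ⟨0, trivial⟩
  refine ⟨z, fun i => ?_⟩
  have hmin : energy z ≤ energy (z - P.coroot'In ℤ i) := by
    by_contra! hlt
    have hle : (energy z).toNat ≤ (energy (z - P.coroot'In ℤ i)).toNat :=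
      hz trivial (Int.toNat_le_toNat hlt.le)
    have := energy_nonneg (z - P.coroot'In ℤ i)
    omega
  have htranslate : y + n • (z - P.coroot'In ℤ i) = y + n • z - n • P.coroot'In ℤ i := by
    rw [smul_sub, add_sub_assoc]
  have hpos : 0 < ∑ k, P.pairingIn ℤ k i ^ 2 :=
    Finset.sum_pos' (fun _ _ => sq_nonneg _) ⟨i, Finset.mem_univ i, by simp⟩
  simp only [energy, htranslate, sum_sq_apply_sub_smul_coroot'In, le_add_iff_nonneg_right] at hmin
  exact sub_nonneg.1 (nonneg_of_mul_nonneg_right hmin (mul_pos hn hpos))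

theorem exists_base_forall_apply_root_nonneg [P.IsRootSystem] [P.IsReduced] (f : M →+ ℚ) :
    ∃ b : P.Base, ∀ j ∈ b.support, 0 ≤ f (P.root j) := by
  let : Module ℚ M := Module.compHom M (algebraMap ℚ R)
  obtain ⟨g, hg⟩ : ∃ g : Dual ℚ M, ∀ i, g (P.root i) ≠ 0 :=
    exists_dual_forall_apply_ne_zero P.root fun i => P.ne_zero i
  obtain ⟨K, hK⟩ : ∃ K : ℚ, ∀ i, f (P.root i) ≠ 0 →
      SignType.sign (K * f (P.root i) + g (P.root i)) = SignType.sign (f (P.root i)) :=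
    (eventually_all.2 fun i => eventually_imp_distrib_left.2 fun hi =>
      eventually_sign_mul_add_eq hi (g (P.root i))).exists
  -- A generic perturbation of `f`: nonzero on all roots, with the sign of `f` wherever `f ≠ 0`.
  let h : M →+ ℚ := (AddMonoidHom.mulLeft K).comp f + g
  have h_apply (v : M) : h v = K * f v + g v := rfl
  have h_ne_zero (i : ι) : h (P.root i) ≠ 0 := by
    by_cases hi : f (P.root i) = 0
    · simpa [h_apply, hi] using hg i
    · rwa [← sign_ne_zero, h_apply, hK i hi, sign_ne_zero]
  let := P.indexNeg
  refine ⟨RootPairing.Base.mk' P (IsAddIndecomposable.baseOf P.root h)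
    (P.linearIndepOn_root_baseOf h h_ne_zero)
    (fun i => IsAddIndecomposable.mem_or_neg_mem_closure_baseOf P.root h i (h_ne_zero i) (by simp)),
    fun j hj => ?_⟩
  simp only [RootPairing.Base.mk', Set.Finite.mem_toFinset] at hj
  have hpos : 0 < h (P.root j) := hj.1
  by_contra! hneg
  rw [← sign_eq_one_iff, h_apply, hK j hneg.ne, sign_eq_one_iff] at hpos
  exact hpos.not_gt hneg

end RootPairing

section HighestRoot

variable {ι R M N : Type*} [Field R] [CharZero R] [AddCommGroup M] [Module R M]
  [AddCommGroup N] [Module R N] {P : RootPairing ι R M N}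

/-- `m` is a maximal root with respect to the base `b`: it is positive and its sum with a positive
root is never a root. -/
def IsMaximalRoot (b : P.Base) (m : ι) : Prop :=
  b.IsPos m ∧ ∀ k, b.IsPos k → P.root m + P.root k ∉ Set.range P.root

/-- `θ` is the highest root with respect to the base `b`: its difference with any root is a
sum of simple roots. -/
def IsHighestRoot (b : P.Base) (θ : ι) : Prop :=
  ∀ i, P.root θ - P.root i ∈ AddSubmonoid.closure (P.root '' b.support)

theorem exists_nonneg_root_eq_sum {b : P.Base} {m : ι} (hm : b.IsPos m) :
    ∃ f : ι → ℤ, (∀ j, 0 ≤ f j) ∧ P.root m = ∑ j ∈ b.support, f j • P.root j := by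
  obtain ⟨f, -, hf, hsum⟩ := b.exists_root_eq_sum_int m
  refine ⟨f, (hf.resolve_right fun hneg => ?_).le, hsum⟩
  rw [b.isPos_iff, b.height_eq_sum hsum] at hm
  exact hm.not_ge (Finset.sum_nonpos fun j _ => hneg.le j)

variable [P.IsCrystallographic]

theorem pairingIn_eq_sum_of_root_eq_sum {s : Finset ι} {f : ι → ℤ} {m : ι}
    (hf : P.root m = ∑ j ∈ s, f j • P.root j) (i : ι) :
    P.pairingIn ℤ m i = ∑ j ∈ s, f j * P.pairingIn ℤ j i :=
  FaithfulSMul.algebraMap_injective ℤ R <| by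
    rw [P.algebraMap_pairingIn, ← P.root_coroot'_eq_pairing, hf]
    simp [← P.algebraMap_pairingIn ℤ]

variable [Finite ι]

theorem eq_support_of_pairingIn_eq_zero [P.IsReduced] [P.IsIrreducible] {b : P.Base} {T : Set ι}
    (hTb : T ⊆ b.support) (hT : T.Nonempty)
    (h : ∀ j ∈ b.support, j ∉ T → ∀ t ∈ T, P.pairingIn ℤ t j = 0) : T = b.support := by
  have horth (j : ι) (hj : j ∈ b.support) (hjT : j ∉ T) (t : ι) (ht : t ∈ T) :
      P.IsOrthogonal j t := by
    have htj := h j hj hjT t ht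
    simp [RootPairing.IsOrthogonal, ← P.algebraMap_pairingIn ℤ, htj, P.pairingIn_eq_zero_iff.1 htj]
  have hinv : ∀ j ∈ b.support,
      Submodule.span R (P.root '' T) ∈ Module.End.invtSubmodule (P.reflection j) := by
    intro j hj
    by_cases hjT : j ∈ T
    · exact Submodule.mem_invtSubmodule_reflection_of_mem _ _
        (Submodule.subset_span ⟨j, hjT, rfl⟩)
    · refine (Module.End.mem_invtSubmodule _).2 fun x hx => ?_
      rwa [Submodule.mem_comap, LinearEquiv.coe_coe,
        (RootPairing.isFixedPt_reflection_of_isOrthogonal (horth j hj hjT) hx).eq]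
  have hbot : Submodule.span R (P.root '' T) ≠ ⊥ := by
    obtain ⟨t, ht⟩ := hT
    exact Submodule.ne_bot_iff _ |>.2 ⟨_, Submodule.subset_span ⟨t, ht, rfl⟩, P.ne_zero t⟩
  have htop : Submodule.span R (P.root '' T) = ⊤ :=
    RootPairing.IsIrreducible.eq_top_of_invtSubmodule_reflection (P := P) _
      ((RootPairing.Base.forall_mem_support_invtSubmodule_iff _).1 hinv) hbot
  refine hTb.antisymm fun j hj => by_contra fun hjT => ?_
  exact b.linearIndepOn_root.notMem_span hj (Submodule.span_mono
    (Set.image_mono (Set.subset_sdiff_singleton hTb hjT)) (htop ▸ Submodule.mem_top))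

namespace IsMaximalRoot

variable {b : P.Base} {m n : ι}

theorem pairingIn_nonneg (hm : IsMaximalRoot b m) {j : ι} (hj : b.IsPos j) :
    0 ≤ P.pairingIn ℤ m j := by
  by_contra! hneg
  refine hm.2 j hj (P.root_add_root_mem_of_pairingIn_neg hneg fun hmj => ?_)
  let := P.indexNeg
  have hmj : m = -j := P.root.injective (by simpa using hmj)
  exact (RootPairing.Base.IsPos.neg_iff_not b j).1 (hmj ▸ hm.1) hj

variable [P.IsReduced] [P.IsIrreducible]

theorem coeff_pos (hm : IsMaximalRoot b m) {f : ι → ℤ} (hf0 : ∀ j, 0 ≤ f j)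
    (hf : P.root m = ∑ j ∈ b.support, f j • P.root j) {j : ι} (hj : j ∈ b.support) : 0 < f j := by
  let T : Set ι := {t | t ∈ b.support ∧ f t ≠ 0}
  have hT : T.Nonempty := by
    by_contra! hT
    refine P.ne_zero m (hf.trans (Finset.sum_eq_zero fun t ht => ?_))
    have hft : f t = 0 := by_contra fun h => Set.eq_empty_iff_forall_notMem.1 hT t ⟨ht, h⟩
    rw [hft, zero_smul]
  have horth : ∀ j ∈ b.support, j ∉ T → ∀ t ∈ T, P.pairingIn ℤ t j = 0 := by
    intro j hj hjT t ht
    have hfj : f j = 0 := by_contra fun h => hjT ⟨hj, h⟩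
    have hterm : ∀ k ∈ b.support, f k * P.pairingIn ℤ k j ≤ 0 := by
      intro k hk
      rcases eq_or_ne k j with rfl | hkj
      · rw [hfj, zero_mul]
      · exact mul_nonpos_of_nonneg_of_nonpos (hf0 k) (b.pairingIn_le_zero_of_ne hkj hk hj)
    have hsum := hm.pairingIn_nonneg (RootPairing.Base.isPos_of_mem_support hj)
    rw [pairingIn_eq_sum_of_root_eq_sum hf] at hsum
    have hzero := (Finset.sum_eq_zero_iff_of_nonpos hterm).1
      (le_antisymm (Finset.sum_nonpos hterm) hsum) t ht.1
    exact (mul_eq_zero.1 hzero).resolve_left ht.2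
  have hjT : j ∈ T := eq_support_of_pairingIn_eq_zero (fun t ht => ht.1) hT horth ▸ hj
  exact (hf0 j).lt_of_ne' hjT.2

theorem pairingIn_pos (hm : IsMaximalRoot b m) (hn : IsMaximalRoot b n) :
    0 < P.pairingIn ℤ m n := by
  obtain ⟨f, hf0, hf⟩ := exists_nonneg_root_eq_sum hm.1
  have hnonneg (j : ι) (hj : j ∈ b.support) : 0 ≤ P.pairingIn ℤ j n := by
    by_contra! hneg
    exact ((P.pairingIn_lt_zero_iff ℤ).1 hneg).not_ge
      (hn.pairingIn_nonneg (RootPairing.Base.isPos_of_mem_support hj))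
  obtain ⟨j, hj, hjn⟩ := hn.1.exists_mem_support_pos_pairingIn
  rw [pairingIn_eq_sum_of_root_eq_sum hf]
  exact Finset.sum_pos' (fun k hk => mul_nonneg (hf0 k) (hnonneg k hk))
    ⟨j, hj, mul_pos (hm.coeff_pos hf0 hf hj) hjn⟩

protected theorem eq (hm : IsMaximalRoot b m) (hn : IsMaximalRoot b n) : m = n := by
  by_contra hne
  obtain ⟨k, hk⟩ := P.root_sub_root_mem_of_pairingIn_pos (hm.pairingIn_pos hn) hne
  let := P.indexNeg
  rcases RootPairing.Base.IsPos.or_neg b k with hpos | hneg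
  · exact hn.2 k hpos ⟨m, by rw [hk]; abel⟩
  · exact hm.2 (-k) hneg ⟨n, by rw [show P.root (-k) = -P.root k by simp, hk]; abel⟩

end IsMaximalRoot

theorem root_mem_closure_of_isPos {b : P.Base} {i : ι} (hi : b.IsPos i) :
    P.root i ∈ AddSubmonoid.closure (P.root '' b.support) := by
  have hsimple : ∀ j ∈ b.support, P.root j ∈ AddSubmonoid.closure (P.root '' b.support) :=
    fun j hj => AddSubmonoid.subset_closure ⟨j, hj, rfl⟩
  refine hi.induction_on_add hsimple fun k j l hl hk hj => ?_
  rw [hl]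
  exact add_mem hk (hsimple j hj)

theorem exists_isMaximalRoot_sub_mem_closure {b : P.Base} {i : ι} (hi : b.IsPos i) :
    ∃ m, IsMaximalRoot b m ∧
      P.root m - P.root i ∈ AddSubmonoid.closure (P.root '' b.support) := by
  obtain ⟨m, ⟨hm, hmi⟩, hmax⟩ := Set.exists_max_image
    {m | b.IsPos m ∧ P.root m - P.root i ∈ AddSubmonoid.closure (P.root '' b.support)} b.height
    (Set.toFinite _) ⟨i, hi, by simp⟩
  refine ⟨m, ⟨hm, ?_⟩, hmi⟩
  rintro k hk ⟨l, hl⟩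
  have hle : b.height l ≤ b.height m := hmax l ⟨hm.add hk hl, by
    rw [hl, add_sub_right_comm]
    exact add_mem hmi (root_mem_closure_of_isPos hk)⟩
  rw [b.height_add hl] at hle
  exact hle.not_gt (lt_add_of_pos_right _ (b.isPos_iff.1 hk))

theorem exists_isHighestRoot [Nonempty ι] [P.IsReduced] [P.IsIrreducible] (b : P.Base) :
    ∃ θ, IsHighestRoot b θ := by
  obtain ⟨j, hj⟩ := b.support_nonempty
  obtain ⟨θ, hθ, -⟩ :=
    exists_isMaximalRoot_sub_mem_closure (RootPairing.Base.isPos_of_mem_support hj)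
  refine ⟨θ, fun i => ?_⟩
  let := P.indexNeg
  rcases RootPairing.Base.IsPos.or_neg b i with hpos | hneg
  · obtain ⟨m, hm, hmi⟩ := exists_isMaximalRoot_sub_mem_closure hpos
    rwa [hm.eq hθ] at hmi
  · simpa [sub_eq_add_neg] using
      add_mem (root_mem_closure_of_isPos hθ.1) (root_mem_closure_of_isPos hneg)

end HighestRoot

section Alcove

open Module

variable {ι R M N : Type*} [Field R] [AddCommGroup M] [Module R M] [AddCommGroup N] [Module R N]
  {P : RootPairing ι R M N}

section Wall

variable {K : Type*} [AddCommGroup K] [PartialOrder K] [IsOrderedAddMonoid K]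
  {b : P.Base} {f : M →+ K} {θ : ι} {a : K}

theorem root_mem_span_insert_of_apply_eq (hf : ∀ j ∈ b.support, 0 ≤ f (P.root j))
    (hθ : IsHighestRoot b θ) (ha : ∀ i, f (P.root i) ≤ a) {i : ι} (hi : f (P.root i) = a) :
    P.root i ∈
      Submodule.span R (insert (P.root θ) (P.root '' {j | j ∈ b.support ∧ f (P.root j) = 0})) := by
  have hsub : f (P.root θ - P.root i) = 0 := by
    refine le_antisymm ?_ (apply_nonneg_of_mem_closure (Set.forall_mem_image.2 hf) (hθ i))
    rw [map_sub, hi, sub_nonpos]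
    exact ha θ
  rw [← sub_sub_cancel (P.root θ) (P.root i)]
  exact sub_mem (Submodule.subset_span (Set.mem_insert _ _))
    (Submodule.span_mono (Set.subset_insert _ _)
      (mem_span_of_mem_closure_of_apply_eq_zero R hf (hθ i) hsub))

variable [Finite ι] [CharZero R] [P.IsCrystallographic]

theorem root_mem_span_of_apply_eq_zero (hf : ∀ j ∈ b.support, 0 ≤ f (P.root j)) {i : ι}
    (hi : f (P.root i) = 0) :
    P.root i ∈ Submodule.span R (P.root '' {j | j ∈ b.support ∧ f (P.root j) = 0}) := by
  let := P.indexNeg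
  rcases RootPairing.Base.IsPos.or_neg b i with hpos | hneg
  · exact mem_span_of_mem_closure_of_apply_eq_zero R hf (root_mem_closure_of_isPos hpos) hi
  · simpa using
      mem_span_of_mem_closure_of_apply_eq_zero R hf (root_mem_closure_of_isPos hneg) (by simp [hi])

theorem subsingleton_support_apply_ne_zero_of_span_eq_top
    (hf : ∀ j ∈ b.support, 0 ≤ f (P.root j)) (hθ : IsHighestRoot b θ)
    (ha : ∀ i, f (P.root i) ≤ a)
    (hspan : Submodule.span R
      (P.root '' {i | f (P.root i) = 0 ∨ f (P.root i) = a ∨ f (P.root i) = -a}) = ⊤) :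
    {j | j ∈ b.support ∧ f (P.root j) ≠ 0}.Subsingleton := by
  let S : Set ι := {j | j ∈ b.support ∧ f (P.root j) = 0}
  have htop : Submodule.span R (insert (P.root θ) (P.root '' S)) = ⊤ := by
    rw [eq_top_iff, ← hspan, Submodule.span_le]
    rintro _ ⟨i, hi | hi | hi, rfl⟩
    · exact Submodule.span_mono (Set.subset_insert _ _) (root_mem_span_of_apply_eq_zero hf hi)
    · exact root_mem_span_insert_of_apply_eq hf hθ ha hi
    · let := P.indexNeg
      simpa using root_mem_span_insert_of_apply_eq hf hθ ha (i := -i) (by simp [hi])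
  exact (subsingleton_sdiff_of_span_insert_eq_top b.linearIndepOn_root (fun j hj => hj.1) htop).anti
    fun j hj => ⟨hj.1, fun hjS => hj.2 hjS.2⟩

end Wall

variable [Finite ι] [CharZero R] [P.IsCrystallographic] [P.IsReduced]

theorem exists_dual_lift_zmod_apply_le [P.IsRootSystem] {n : ℕ} (hn : n ≠ 0)
    (ψ : P.rootSpan ℤ →+ ZMod n) :
    ∃ y : Dual ℤ (P.rootSpan ℤ), (∀ v, (y v : ZMod n) = ψ v) ∧
      ∀ i, y (P.rootSpanMem ℤ i) ≤ n := by
  obtain ⟨b⟩ := P.nonempty_base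
  have : Module.Free ℤ (P.rootSpan ℤ) := .of_basis b.toWeightBasisInt
  obtain ⟨y, hy⟩ := projective_lifting_property (Int.castAddHom (ZMod n)).toIntLinearMap
    ψ.toIntLinearMap ZMod.intCast_surjective
  obtain ⟨z, hz⟩ := exists_forall_add_smul_apply_rootSpanMem_le P y
    (Nat.cast_pos.2 (Nat.pos_of_ne_zero hn))
  refine ⟨y + (n : ℤ) • z, fun v => ?_, hz⟩
  have hyv : (y v : ZMod n) = ψ v := LinearMap.congr_fun hy v
  simp [hyv]

theorem exists_base_subsingleton_support_apply_ne_zero [P.IsIrreducible] {n : ℕ} (hn : n ≠ 0)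
    (ψ : P.rootSpan ℤ →+ ZMod n)
    (hspan : Submodule.span R (P.root '' {i | ψ (P.rootSpanMem ℤ i) = 0}) = ⊤) :
    ∃ b : P.Base, {j | j ∈ b.support ∧ ψ (P.rootSpanMem ℤ j) ≠ 0}.Subsingleton := by
  have := RootPairing.IsIrreducible.nontrivial P
  have : Nonempty ι := by
    by_contra! h
    simp [Set.eq_empty_of_isEmpty] at hspan
  obtain ⟨y, hyψ, hyn⟩ := exists_dual_lift_zmod_apply_le hn ψ
  obtain ⟨f, hfy⟩ := exists_addMonoidHom_rat_extension (G := (P.rootSpan ℤ).toAddSubgroup)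
    y.toAddMonoidHom
  replace hfy (i : ι) : f (P.root i) = y (P.rootSpanMem ℤ i) := hfy (P.rootSpanMem ℤ i)
  obtain ⟨b, hb⟩ := exists_base_forall_apply_root_nonneg P f
  obtain ⟨θ, hθ⟩ := exists_isHighestRoot b
  have hfn (i : ι) : f (P.root i) ≤ n := by
    rw [hfy]
    exact_mod_cast hyn i
  have hwall {i : ι} (hi : ψ (P.rootSpanMem ℤ i) = 0) :
      f (P.root i) = 0 ∨ f (P.root i) = n ∨ f (P.root i) = -n := by
    have hdvd : (n : ℤ) ∣ y (P.rootSpanMem ℤ i) := by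
      rw [← ZMod.intCast_zmod_eq_zero_iff_dvd, hyψ, hi]
    let := P.indexNeg
    have hneg : P.rootSpanMem ℤ (-i) = -P.rootSpanMem ℤ i := Subtype.ext (by simp)
    have habs : |y (P.rootSpanMem ℤ i)| ≤ n :=
      abs_le'.2 ⟨hyn i, by rw [← map_neg, ← hneg]; exact hyn (-i)⟩
    rw [hfy]
    exact_mod_cast eq_zero_or_eq_or_eq_neg_of_dvd_of_abs_le hdvd habs
  refine ⟨b, (subsingleton_support_apply_ne_zero_of_span_eq_top hb hθ hfn ?_).anti fun j hj =>
    ⟨hj.1, fun hfj => hj.2 ?_⟩⟩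
  · exact top_le_iff.1 (hspan ▸ Submodule.span_mono (Set.image_mono fun i hi => hwall hi))
  · rw [hfy, Int.cast_eq_zero] at hfj
    simp [← hyψ, hfj]

theorem isAddCyclic_of_span_root_eq_top [P.IsIrreducible] {Γ : Type*} [AddGroup Γ]
    {φ : P.rootSpan ℤ →+ Γ} (hφ : Function.Surjective φ) {n : ℕ} (hn : n ≠ 0) (ψ : Γ →+ ZMod n)
    (hψ : ∀ i, ψ (φ (P.rootSpanMem ℤ i)) = 0 → φ (P.rootSpanMem ℤ i) = 0)
    (hspan : Submodule.span R (P.root '' {i | φ (P.rootSpanMem ℤ i) = 0}) = ⊤) :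
    IsAddCyclic Γ := by
  obtain ⟨b, hb⟩ := exists_base_subsingleton_support_apply_ne_zero hn (ψ.comp φ) <|
    top_le_iff.1 (hspan ▸ Submodule.span_mono (Set.image_mono fun i hi => by simp_all))
  refine isAddCyclic_of_closure_eq_top (T := φ '' (P.rootSpanMem ℤ '' b.support)) ?_ ?_
  · rw [← AddMonoidHom.map_closure, ← Submodule.span_int_eq_addSubgroupClosure,
      b.spanIntRootSupport, Submodule.top_toAddSubgroup, ← AddMonoidHom.range_eq_map,
      AddMonoidHom.range_eq_top.2 hφ]
  · refine (hb.image fun j => φ (P.rootSpanMem ℤ j)).anti ?_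
    rintro _ ⟨⟨_, ⟨j, hj, rfl⟩, rfl⟩, hne⟩
    exact ⟨j, ⟨hj, fun h => hne (hψ j h)⟩, rfl⟩

end Alcove

section LieRoots

open LieAlgebra.IsKilling

variable (L : Type*) [LieRing L] [LieAlgebra ℂ L] [FiniteDimensional ℂ L]

theorem lieRoots_eq_range_root [LieAlgebra.IsKilling ℂ L] (H : LieSubalgebra ℂ L)
    [H.IsCartanSubalgebra] : lieRoots L H = Set.range (rootSystem H).root := by
  ext α
  constructor
  · rintro ⟨hα, hspace⟩
    let w : LieModule.Weight ℂ H L := ⟨⇑α, hspace⟩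
    have hw : w.IsNonZero := LieModule.Weight.coe_toLinear_ne_zero_iff.1 hα
    exact ⟨⟨w, by simpa [LieSubalgebra.root] using hw⟩, rfl⟩
  · rintro ⟨w, rfl⟩
    exact ⟨(rootSystem H).ne_zero w, w.1.genWeightSpace_ne_bot'⟩

theorem exists_surjective_rootSpan_apply_eq_rootImage [LieAlgebra.IsKilling ℂ L]
    (H : LieSubalgebra ℂ L) [H.IsCartanSubalgebra] (P : Set (Module.Dual ℂ H)) :
    ∃ φ : (rootSystem H).rootSpan ℤ →+ GammaK L H P, Function.Surjective φ ∧
      ∀ (i) (hi : (rootSystem H).root i ∈ lieRoots L H),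
        φ ((rootSystem H).rootSpanMem ℤ i) = rootImage L H P hi := by
  have hspan : ((rootSystem H).rootSpan ℤ).toAddSubgroup = AddSubgroup.closure (lieRoots L H) := by
    rw [lieRoots_eq_range_root, ← Submodule.span_int_eq_addSubgroupClosure]
  let e := AddEquiv.addSubgroupCongr hspan
  refine ⟨(QuotientAddGroup.mk' _).comp e.toAddMonoidHom,
    (QuotientAddGroup.mk'_surjective _).comp e.surjective, fun _ _ => rfl⟩

theorem finite_noncyclic_character_kernel_contains_root_image_general
    [LieAlgebra.IsSimple ℂ L] (H : LieSubalgebra ℂ L) [H.IsCartanSubalgebra]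
    {P : Set (Module.Dual ℂ H)} (hP : P ⊆ lieRoots L H) (hfin : Finite (GammaK L H P))
    (hnc : ¬ IsAddCyclic (GammaK L H P)) {R : Type*} [CommRing R] [IsDomain R]
    (χ : AddChar (GammaK L H P) R) :
    ∃ (α : Module.Dual ℂ H) (hα : α ∈ lieRoots L H),
      rootImage L H P hα ≠ 0 ∧ χ (rootImage L H P hα) = 1 := by
  by_contra! hχ
  obtain ⟨n, hn, ψ, hψ⟩ := exists_addMonoidHom_zmod_apply_eq_zero_iff χ
  obtain ⟨φ, hφ, hφroot⟩ := exists_surjective_rootSpan_apply_eq_rootImage L H P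
  have hrange := lieRoots_eq_range_root L H
  refine hnc (isAddCyclic_of_span_root_eq_top hφ hn ψ (fun i hi => ?_) ?_)
  · have hα : (rootSystem H).root i ∈ lieRoots L H := hrange ▸ Set.mem_range_self i
    rw [hφroot i hα] at hi ⊢
    exact by_contra fun h => hχ _ hα h ((hψ _).1 hi)
  · have hΩ : Submodule.span ℂ (lieRoots L H) = ⊤ := by
      rw [hrange, RootPairing.IsRootSystem.span_root_eq_top]
    have hspanP : (⊤ : Submodule ℂ (Module.Dual ℂ H)) ≤ Submodule.span ℂ P :=
      hΩ.ge.trans span_le_span_of_finite_quotient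
    refine top_le_iff.1 (hspanP.trans (Submodule.span_mono fun p hp => ?_))
    obtain ⟨i, rfl⟩ := hrange ▸ hP hp
    refine ⟨i, ?_, rfl⟩
    rw [Set.mem_ofPred_eq, hφroot i (hP hp)]
    exact (QuotientAddGroup.eq_zero_iff _).2 (AddSubgroup.subset_closure hp)

end LieRoots

/-- If `𝔤` is simple and `Γ_𝔨` is finite non-cyclic, then the kernel of every character
`χ : Γ_𝔨 → ℂ∖{0}` contains a nonzero image of a root. -/
theorem finite_noncyclic_character_kernel_contains_root_image
    (L : Type*) [LieRing L] [LieAlgebra ℂ L] [FiniteDimensional ℂ L]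
    [LieAlgebra.IsSimple ℂ L]
    (H : LieSubalgebra ℂ L) [H.IsCartanSubalgebra]
    (P : Set (Module.Dual ℂ H))
    (hP : IsClosedSymmetricSubsystem (lieRoots L H) P)
    (hfin : Finite (GammaK L H P))
    (hnc : ¬ IsAddCyclic (GammaK L H P))
    (χ : GammaK L H P → ℂ)
    (hmul : ∀ x y, χ (x + y) = χ x * χ y)
    (hne : ∀ x, χ x ≠ 0) :
    ∃ (α : Module.Dual ℂ H) (hα : α ∈ lieRoots L H),
      rootImage L H P hα ≠ 0 ∧ χ (rootImage L H P hα) = 1 := by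
  have hχ : χ 0 = 1 := mul_left_cancel₀ (hne 0) (by rw [← hmul, add_zero, mul_one])
  exact finite_noncyclic_character_kernel_contains_root_image_general L H hP.1 hfin hnc
    ⟨χ, hχ, hmul⟩
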